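/- arXiv:2105.13130 — 6 statements merged into one kernel-verified Lean document; each statement's English description precedes it below -/
import Mathlib

section
/- Generalized Grassmann identity: for every n ≥ 2 and all a, b, c ∈ ℝⁿ, ⟦a⟧ₙᵀ (b ×ₙ c) = ⟨a, b⟩·c − ⟨a, c⟩·b. -/
open Matrix BigOperators

/-- Index set `Pₙ = {(i,j) : 1 ≤ i < j ≤ n}` of strictly increasing pairs;
`ℝ^{n(n-1)/2}` is identified with `PairIdx n → ℝ`. -/
abbrev PairIdx (n : ℕ) := {p : Fin n × Fin n // p.1 < p.2}

/-- The generalized cross product `a ×ₙ b ∈ ℝ^{n(n-1)/2}`,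
with `(a ×ₙ b)_{(i,j)} = aᵢ bⱼ - aⱼ bᵢ` for `i < j`. -/
def crossN (n : ℕ) (a b : Fin n → ℝ) : PairIdx n → ℝ :=
  fun p => a p.1.1 * b p.1.2 - a p.1.2 * b p.1.1

/-- The matrix `⟦a⟧ₙ` with entries `⟦a⟧ₙ_{(i,j),k} = aᵢ δ_{jk} - aⱼ δ_{ik}`,
so that `⟦a⟧ₙ b = a ×ₙ b` for all `b`. -/
def crossMat (n : ℕ) (a : Fin n → ℝ) : Matrix (PairIdx n) (Fin n) ℝ :=
  Matrix.of fun p k =>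
    a p.1.1 * (if p.1.2 = k then 1 else 0) - a p.1.2 * (if p.1.1 = k then 1 else 0)

/-- generalized Grassmann identity
`⟦a⟧ₙᵀ (b ×ₙ c) = ⟨a,b⟩·c - ⟨a,c⟩·b`. -/
theorem grassmann_identity (n : ℕ) (hn : 2 ≤ n) (a b c : Fin n → ℝ) :
    (crossMat n a)ᵀ.mulVec (crossN n b c) = (a ⬝ᵥ b) • c - (a ⬝ᵥ c) • b := by
  funext k
  let G : Fin n → Fin n → ℝ := fun i j => a i * (if j = k then 1 else 0) * (b i * c j - b j * c i)
  have h1 : ((crossMat n a)ᵀ.mulVec (crossN n b c)) k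
      = ∑ p : PairIdx n, (G p.1.1 p.1.2 + G p.1.2 p.1.1) := by
    simp only [Matrix.mulVec, dotProduct, Matrix.transpose_apply, crossMat, crossN,
      Matrix.of_apply, G]
    exact Finset.sum_congr rfl fun p _ => by ring
  have h2 : ∑ p : PairIdx n, (G p.1.1 p.1.2 + G p.1.2 p.1.1)
      = ∑ i, ∑ j, (if i < j then G i j + G j i else 0) := by
    rw [← Fintype.sum_prod_type' (f := fun i j => if i < j then G i j + G j i else 0),
      ← Finset.sum_filter]
    exact (Finset.sum_subtype (Finset.univ.filter fun p : Fin n × Fin n => p.1 < p.2)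
      (by simp) (fun p => G p.1 p.2 + G p.2 p.1)).symm
  have h3 : ∑ i, ∑ j, (if i < j then G i j + G j i else 0) = ∑ i, ∑ j, G i j := by
    have e : ∀ i j, (if i < j then G i j + G j i else 0)
        = (if i < j then G i j else 0) + (if i < j then G j i else 0) := by
      intro i j; split_ifs <;> simp
    simp only [e, Finset.sum_add_distrib]
    rw [Finset.sum_comm (f := fun i j => if i < j then G j i else 0)]
    simp only [← Finset.sum_add_distrib]
    refine Finset.sum_congr rfl fun i _ => Finset.sum_congr rfl fun j _ => ?_
    rcases lt_trichotomy i j with h | h | h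
    · simp [h, h.not_gt]
    · subst h
      simp [G, mul_comm]
    · simp [h, h.not_gt]
  rw [h1, h2, h3]
  have h4 : ∀ i, ∑ j, G i j = a i * b i * c k - a i * c i * b k := by
    intro i
    simp only [G, mul_ite, ite_mul, mul_one, mul_zero, zero_mul, Finset.sum_ite_eq',
      Finset.mem_univ, if_true]
    ring
  simp only [h4, Finset.sum_sub_distrib, ← Finset.sum_mul]
  simp [dotProduct]
end

section
/- Generalized Jacobi identity: for every n ≥ 2 and all a, b, c ∈ ℝⁿ, ⟦a⟧ₙᵀ(b ×ₙ c) + ⟦b⟧ₙᵀ(c ×ₙ a) + ⟦c⟧ₙᵀ(a ×ₙ b) = 0. -/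
open Matrix BigOperators

/-- generalized Jacobi identity
`⟦a⟧ₙᵀ(b ×ₙ c) + ⟦b⟧ₙᵀ(c ×ₙ a) + ⟦c⟧ₙᵀ(a ×ₙ b) = 0`. -/
theorem jacobi_identity (n : ℕ) (hn : 2 ≤ n) (a b c : Fin n → ℝ) :
    (crossMat n a)ᵀ.mulVec (crossN n b c) + (crossMat n b)ᵀ.mulVec (crossN n c a) +
      (crossMat n c)ᵀ.mulVec (crossN n a b) = 0 := by
  funext k
  simp only [Pi.add_apply, Pi.zero_apply, Matrix.mulVec, dotProduct, Matrix.transpose_apply,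
    crossMat, crossN, Matrix.of_apply]
  rw [← Finset.sum_add_distrib, ← Finset.sum_add_distrib]
  apply Finset.sum_eq_zero
  intro p _
  ring
end

section
/- Generalized Room identity: for every n ≥ 2 and all a, b ∈ ℝⁿ, the matrix product satisfies ⟦a⟧ₙᵀ ⟦b⟧ₙ = ⟨b, a⟩·Idₙ − b ⊗ a as n×n matrices; in particular ⟦b⟧ₙᵀ ⟦b⟧ₙ = ‖b‖²·Idₙ − b ⊗ b is symmetric. -/
open Matrix BigOperators

lemma room_aux (n : ℕ) (F : Fin n → Fin n → ℝ) (hs : ∀ i j, F i j = F j i)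
    (hd : ∀ i, F i i = 0) :
    2 * ∑ p : PairIdx n, F p.1.1 p.1.2 = ∑ i, ∑ j, F i j := by
  have h1 : ∑ p : PairIdx n, F p.1.1 p.1.2 = ∑ i, ∑ j, if i < j then F i j else 0 := by
    rw [← Finset.sum_subtype (Finset.univ.filter fun p : Fin n × Fin n => p.1 < p.2)
      (by simp) (fun p => F p.1 p.2), Finset.sum_filter, Fintype.sum_prod_type]
  have h2 : ∑ p : PairIdx n, F p.1.1 p.1.2 = ∑ i, ∑ j, if j < i then F i j else 0 := by
    rw [h1, Finset.sum_comm]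
    refine Finset.sum_congr rfl fun i _ => Finset.sum_congr rfl fun j _ => ?_
    rw [hs]
  rw [two_mul]
  nth_rewrite 1 [h1]
  rw [h2, ← Finset.sum_add_distrib]
  refine Finset.sum_congr rfl fun i _ => ?_
  rw [← Finset.sum_add_distrib]
  refine Finset.sum_congr rfl fun j _ => ?_
  rcases lt_trichotomy i j with h | h | h
  · simp [h, h.not_gt]
  · subst h; simp [hd]
  · simp [h, h.not_gt]

lemma room_main (n : ℕ) (a b : Fin n → ℝ) :
    (crossMat n a)ᵀ * crossMat n b
        = (b ⬝ᵥ a) • (1 : Matrix (Fin n) (Fin n) ℝ) - vecMulVec b a := by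
  ext k l
  have h := room_aux n (fun i j =>
    (a i * (if j = k then 1 else 0) - a j * (if i = k then 1 else 0)) *
    (b i * (if j = l then 1 else 0) - b j * (if i = l then 1 else 0)))
    (fun i j => by ring) (fun i => by ring)
  have h3 : ((crossMat n a)ᵀ * crossMat n b) k l = ∑ p : PairIdx n,
    (a p.1.1 * (if p.1.2 = k then 1 else 0) - a p.1.2 * (if p.1.1 = k then 1 else 0)) *
    (b p.1.1 * (if p.1.2 = l then 1 else 0) - b p.1.2 * (if p.1.1 = l then 1 else 0)) := rfl
  rw [h3]
  have h4 : b ⬝ᵥ a = ∑ i, a i * b i := by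
    simp [dotProduct, mul_comm]
  simp only [Matrix.sub_apply, Matrix.smul_apply, Matrix.one_apply, vecMulVec_apply, h4,
    smul_eq_mul]
  refine mul_left_cancel₀ (two_ne_zero (α := ℝ)) (h.trans ?_)
  simp only [sub_mul, mul_sub, Finset.sum_sub_distrib, mul_ite, ite_mul, mul_one, mul_zero,
    zero_mul, Finset.sum_ite_eq', Finset.sum_ite_eq, Finset.mem_univ, if_true,
    Finset.sum_ite_irrel, Finset.sum_const_zero]
  by_cases hkl : k = l
  · subst hkl; simp; ring
  · simp [hkl, Ne.symm hkl]; ring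

/-- generalized Room identity
`⟦a⟧ₙᵀ ⟦b⟧ₙ = ⟨b,a⟩·Idₙ - b ⊗ a`; in particular
`⟦b⟧ₙᵀ ⟦b⟧ₙ = ‖b‖²·Idₙ - b ⊗ b` is symmetric. -/
theorem room_identity (n : ℕ) (hn : 2 ≤ n) (a b : Fin n → ℝ) :
    (crossMat n a)ᵀ * crossMat n b
        = (b ⬝ᵥ a) • (1 : Matrix (Fin n) (Fin n) ℝ) - vecMulVec b a ∧
    (crossMat n b)ᵀ * crossMat n b
        = (b ⬝ᵥ b) • (1 : Matrix (Fin n) (Fin n) ℝ) - vecMulVec b b ∧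
    ((crossMat n b)ᵀ * crossMat n b).IsSymm := by
  have h := room_main n b b
  refine ⟨room_main n a b, h, ?_⟩
  rw [h]
  ext i j
  simp [Matrix.transpose_apply, Matrix.one_apply, vecMulVec_apply, mul_comm, eq_comm]
end

section
/- For every n ≥ 2 and all a, b ∈ ℝⁿ, the dyadic product can be recovered from the matrix product: b ⊗ a = (tr(⟦a⟧ₙᵀ ⟦b⟧ₙ)/(n−1))·Idₙ − ⟦a⟧ₙᵀ ⟦b⟧ₙ. -/
open Matrix BigOperators

lemma sum_pairs_half (n : ℕ) (f : Fin n → Fin n → ℝ) (hs : ∀ i j, f i j = f j i)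
    (h0 : ∀ i, f i i = 0) :
    ∑ p : PairIdx n, f p.1.1 p.1.2 = (∑ i, ∑ j, f i j) / 2 := by
  have h1 : ∑ p : PairIdx n, f p.1.1 p.1.2 = ∑ i, ∑ j, if i < j then f i j else 0 := by
    rw [← Fintype.sum_prod_type' (f := fun i j => if i < j then f i j else 0),
      ← Finset.sum_filter]
    exact (Finset.sum_subtype _ (by simp) (fun p : Fin n × Fin n => f p.1 p.2)).symm
  have h2 : ∑ i, ∑ j, (if i < j then f i j else 0) = ∑ i, ∑ j, if j < i then f i j else 0 := by
    rw [Finset.sum_comm]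
    refine Finset.sum_congr rfl fun i _ => Finset.sum_congr rfl fun j _ => ?_
    rw [hs]
  have h3 : ∑ i, ∑ j, f i j = ∑ i, ∑ j, (if i < j then f i j else 0)
      + ∑ i, ∑ j, (if j < i then f i j else 0) := by
    simp only [← Finset.sum_add_distrib]
    refine Finset.sum_congr rfl fun i _ => Finset.sum_congr rfl fun j _ => ?_
    rcases lt_trichotomy i j with h | h | h
    · simp [h, h.not_gt]
    · subst h; simp [h0]
    · simp [h, h.not_gt]
  rw [h1]; linarith

lemma crossMat_mul_apply (n : ℕ) (a b : Fin n → ℝ) (k l : Fin n) :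
    ((crossMat n a)ᵀ * crossMat n b) k l
      = (∑ i, a i * b i) * (if k = l then 1 else 0) - b k * a l := by
  have := sum_pairs_half n (fun i j =>
    (a i * (if j = k then 1 else 0) - a j * (if i = k then 1 else 0)) *
    (b i * (if j = l then 1 else 0) - b j * (if i = l then 1 else 0)))
    (fun i j => by ring) (fun i => by ring)
  simp only [Matrix.mul_apply, Matrix.transpose_apply, crossMat, Matrix.of_apply]
  rw [this]
  simp only [sub_mul, mul_sub, Finset.sum_sub_distrib]
  by_cases h : k = l
  · subst h
    simp [Finset.sum_ite_eq, mul_ite, ite_mul]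
    ring
  · have h' : l ≠ k := fun e => h e.symm
    simp [h, h', mul_ite, ite_mul]
    ring

/-- the dyadic product is recovered from the matrix product:
`b ⊗ a = (tr(⟦a⟧ₙᵀ ⟦b⟧ₙ)/(n-1))·Idₙ - ⟦a⟧ₙᵀ ⟦b⟧ₙ`. -/
theorem dyadic_from_crossMat (n : ℕ) (hn : 2 ≤ n) (a b : Fin n → ℝ) :
    vecMulVec b a
      = (((crossMat n a)ᵀ * crossMat n b).trace / ((n : ℝ) - 1)) •
          (1 : Matrix (Fin n) (Fin n) ℝ) - (crossMat n a)ᵀ * crossMat n b := by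
  have htr : ((crossMat n a)ᵀ * crossMat n b).trace = (∑ i, a i * b i) * ((n : ℝ) - 1) := by
    simp only [Matrix.trace, Matrix.diag_apply, crossMat_mul_apply, if_true,
      Finset.sum_sub_distrib, Finset.sum_const, Finset.card_univ, Fintype.card_fin, nsmul_eq_mul,
      mul_comm (b _)]
    ring
  have hn' : (n : ℝ) - 1 ≠ 0 := by
    have : (2 : ℝ) ≤ n := by exact_mod_cast hn
    linarith
  rw [htr, mul_div_assoc, div_self hn', mul_one]
  ext k l
  rw [Matrix.sub_apply, crossMat_mul_apply, Matrix.smul_apply, Matrix.one_apply, vecMulVec_apply,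
    smul_eq_mul]
  ring
end

section
/- For every n ≥ 2 and all a, b ∈ ℝⁿ, the row-wise generalized cross product satisfies (a ⊗ b + b ⊗ a) ×ₙ b = b ⊗ (a ×ₙ b) as n × n(n−1)/2 matrices; equivalently (b ⊗ a) ×ₙ b = 2·sym(a ⊗ b) ×ₙ b = b ⊗ (a ×ₙ b). -/
open Matrix BigOperators

/-- `(a ⊗ b + b ⊗ a) ×ₙ b = b ⊗ (a ×ₙ b)` where `P ×ₙ b := -P ⟦b⟧ₙᵀ`;
equivalently `(b ⊗ a) ×ₙ b = 2·sym(a ⊗ b) ×ₙ b = b ⊗ (a ×ₙ b)`. -/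
theorem sym_dyadic_cross (n : ℕ) (hn : 2 ≤ n) (a b : Fin n → ℝ) :
    -((vecMulVec a b + vecMulVec b a) * (crossMat n b)ᵀ) = vecMulVec b (crossN n a b) ∧
    -(vecMulVec b a * (crossMat n b)ᵀ)
      = (2 : ℝ) • -(((1 : ℝ) / 2) • (vecMulVec a b + (vecMulVec a b)ᵀ) * (crossMat n b)ᵀ) ∧
    -(vecMulVec b a * (crossMat n b)ᵀ) = vecMulVec b (crossN n a b) := by
  have key : ∀ u v : Fin n → ℝ, vecMulVec u v * (crossMat n b)ᵀ = - vecMulVec u (crossN n v b) := by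
    intro u v
    ext i p
    simp only [Matrix.mul_apply, vecMulVec_apply, Matrix.transpose_apply, crossMat, crossN,
      Matrix.of_apply, Matrix.neg_apply, mul_sub, Finset.sum_sub_distrib, mul_ite, mul_one,
      mul_zero, Finset.sum_ite_eq, Finset.mem_univ, if_true]
    ring
  have h0 : vecMulVec a b * (crossMat n b)ᵀ = 0 := by
    rw [key]
    ext i p
    simp only [Matrix.neg_apply, vecMulVec_apply, crossN, Matrix.zero_apply]
    ring
  have ht : (vecMulVec a b)ᵀ = vecMulVec b a := by
    ext i j
    simp only [Matrix.transpose_apply, vecMulVec_apply]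
    ring
  refine ⟨?_, ?_, ?_⟩
  · rw [Matrix.add_mul, h0, key, zero_add, neg_neg]
  · rw [ht, Matrix.smul_mul, Matrix.add_mul, h0, zero_add, ← smul_neg, smul_smul]
    norm_num
  · rw [key, neg_neg]
end

section
/- For every n ≥ 2 and all a, b, c ∈ ℝⁿ, the simultaneous generalized cross product of a dyadic product from both sides satisfies b ×ₙ (a ⊗ c) ×ₙ b = (b ×ₙ a) ⊗ (c ×ₙ b) as n(n−1)/2 × n(n−1)/2 matrices. -/
open Matrix BigOperators

theorem crossMat_mulVec (n : ℕ) (a b : Fin n → ℝ) :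
    crossMat n a *ᵥ b = crossN n a b := by
  ext p
  simp [crossMat, crossN, Matrix.mulVec, dotProduct, sub_mul, Finset.sum_sub_distrib]

/-- simultaneous cross product of a dyadic product from both sides,
`b ×ₙ (a ⊗ c) ×ₙ b = (b ×ₙ a) ⊗ (c ×ₙ b)`, where `b ×ₙ P ×ₙ b := -⟦b⟧ₙ P ⟦b⟧ₙᵀ`. -/
theorem simultaneous_cross_dyadic (n : ℕ) (hn : 2 ≤ n) (a b c : Fin n → ℝ) :
    -(crossMat n b * vecMulVec a c * (crossMat n b)ᵀ)
      = vecMulVec (crossN n b a) (crossN n c b) := by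
  rw [Matrix.mul_vecMulVec, Matrix.vecMulVec_mul, Matrix.vecMul_transpose,
    crossMat_mulVec, crossMat_mulVec]
  ext p q
  simp only [Matrix.neg_apply, vecMulVec_apply, crossN]
  ring
end
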